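/- arXiv:1106.1588 — 8 statements merged into one kernel-verified Lean document; each statement's English description precedes it below -/
import Mathlib

section
/- Let A be a commutative ring, let γ, δ, s, t ∈ A, let q(X,Y) = X² + γXY + δY², and set x = q(X,Y) − q(s,t) in B = A[X,Y]. Define the 2×2 matrices over B: φ = [[δY + δt + γX, X + s + γt], [−(X − s), Y − t]] and ψ = [[Y − t, −(X + s + γt)], [X − s, δY + δt + γX]]. Then φ·ψ = ψ·φ = x·I, where I is the 2×2 identity matrix; that is, (φ, ψ) is a matrix factorization of the element x. -/
open MvPolynomial

/-- Matrix factorization: with `B = A[X,Y]`, `x = q(X,Y) - q(s,t)` where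
`q(X,Y) = X² + γXY + δY²`, and
`φ = [[δY + δt + γX, X + s + γt], [-(X - s), Y - t]]`,
`ψ = [[Y - t, -(X + s + γt)], [X - s, δY + δt + γX]]`,
one has `φψ = ψφ = x·1`. -/
theorem stmt5 {A : Type*} [CommRing A] (γ δ s t : A)
    (x : MvPolynomial (Fin 2) A)
    (hx : x = X 0 ^ 2 + C γ * X 0 * X 1 + C δ * X 1 ^ 2
      - C (s ^ 2 + γ * s * t + δ * t ^ 2))
    (φ ψ : Matrix (Fin 2) (Fin 2) (MvPolynomial (Fin 2) A))
    (hφ : φ = !![C δ * X 1 + C (δ * t) + C γ * X 0, X 0 + C s + C (γ * t);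
                 -(X 0 - C s), X 1 - C t])
    (hψ : ψ = !![X 1 - C t, -(X 0 + C s + C (γ * t));
                 X 0 - C s, C δ * X 1 + C (δ * t) + C γ * X 0]) :
    φ * ψ = x • (1 : Matrix (Fin 2) (Fin 2) (MvPolynomial (Fin 2) A)) ∧
    ψ * φ = x • (1 : Matrix (Fin 2) (Fin 2) (MvPolynomial (Fin 2) A)) := by
  subst hx hφ hψ
  constructor <;> ext1 i j <;> fin_cases i <;> fin_cases j <;>
    simp [Matrix.mul_apply, Fin.sum_univ_two] <;> ring
end

section
/- Let A be a commutative ring, let γ, δ, s, t ∈ A, let q(X,Y) = X² + γXY + δY², let R = A[X,Y]/(q(X,Y) − q(s,t)), and let u, v be the images of X, Y in R. Then v − t is not a zero-divisor in R; that is, for every r ∈ R, (v − t)·r = 0 implies r = 0. -/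
noncomputable section
open MvPolynomial

/-- `q(X,Y) - q(s,t)` in `A[X,Y]`, where `q(X,Y) = X² + γXY + δY²`. -/
def keyRel (A : Type*) [CommRing A] (γ δ s t : A) : MvPolynomial (Fin 2) A :=
  X 0 ^ 2 + C γ * X 0 * X 1 + C δ * X 1 ^ 2 - C (s ^ 2 + γ * s * t + δ * t ^ 2)

/-- `R = A[X,Y]/(q(X,Y) - q(s,t))`. -/
abbrev KeyRing (A : Type*) [CommRing A] (γ δ s t : A) :=
  MvPolynomial (Fin 2) A ⧸ Ideal.span {keyRel A γ δ s t}

/-- `Y - t` is not a zero-divisor in `A[X, Y]`. -/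
theorem X_sub_C_mul_eq_zero {A : Type*} [CommRing A] (t : A) {p : MvPolynomial (Fin 2) A}
    (h : (X 1 - C t) * p = 0) : p = 0 := by
  let e : MvPolynomial (Fin 2) A ≃ₐ[A] Polynomial (MvPolynomial (Fin 1) A) :=
    (renameEquiv A (Equiv.swap 0 1)).trans (finSuccEquiv A 1)
  have he : e (X 1 - C t) = Polynomial.X - Polynomial.C (C t) := by
    simp [e, finSuccEquiv_apply]
  have h' : (Polynomial.X - Polynomial.C (C t)) * e p = 0 := by
    rw [← he, ← map_mul, h, map_zero]
  exact (map_eq_zero_iff e e.injective).1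
    ((Polynomial.monic_X_sub_C _).mul_right_eq_zero_iff.1 h')

/-- The substitution `Y ↦ t`, as a map `A[X, Y] → A[X]`. -/
def evalSnd {A : Type*} [CommRing A] (t : A) : MvPolynomial (Fin 2) A →ₐ[A] Polynomial A :=
  aeval ![Polynomial.X, Polynomial.C t]

/-- A polynomial vanishing under `Y ↦ t` is divisible by `Y - t`. -/
theorem X_sub_C_dvd_of_evalSnd_eq_zero {A : Type*} [CommRing A] (t : A)
    {p : MvPolynomial (Fin 2) A} (h : evalSnd t p = 0) : X 1 - C t ∣ p := by
  let I : Ideal (MvPolynomial (Fin 2) A) := Ideal.span {X 1 - C t}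
  have hcomp : ((Ideal.Quotient.mkₐ A I).comp (Polynomial.aeval (X 0))).comp (evalSnd t) =
      Ideal.Quotient.mkₐ A I := by
    ext i
    fin_cases i
    · simp [evalSnd]
    · simpa [evalSnd, algebraMap_eq] using
        (Ideal.Quotient.eq.2 (Ideal.mem_span_singleton_self (X 1 - C t))).symm
  have hp := DFunLike.congr_fun hcomp p
  rw [AlgHom.comp_apply, h, map_zero] at hp
  exact Ideal.mem_span_singleton.1 (Ideal.Quotient.eq_zero_iff_mem.1 hp.symm)

theorem monic_evalSnd_keyRel {A : Type*} [CommRing A] (γ δ s t : A) :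
    (evalSnd t (keyRel A γ δ s t)).Monic := by
  have h : evalSnd t (keyRel A γ δ s t) = Polynomial.X ^ 2 +
      (Polynomial.C (γ * t) * Polynomial.X + Polynomial.C (-(s ^ 2 + γ * s * t))) := by
    simp [evalSnd, keyRel, Polynomial.algebraMap_eq]
    ring
  rw [h]
  exact Polynomial.monic_X_pow_add (Polynomial.degree_linear_le.trans_lt (by norm_num))

/-- In `R = A[X,Y]/(q(X,Y) - q(s,t))` the element `v - t` is not a zero-divisor: for
every `r ∈ R`, `(v - t)·r = 0` implies `r = 0`. -/
theorem stmt7 {A : Type*} [CommRing A] (γ δ s t : A) :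
    ∀ r : KeyRing A γ δ s t,
      Ideal.Quotient.mk (Ideal.span {keyRel A γ δ s t}) (X 1 - C t) * r = 0 → r = 0 := by
  intro r hr
  obtain ⟨f, rfl⟩ := Ideal.Quotient.mk_surjective r
  rw [← map_mul, Ideal.Quotient.eq_zero_iff_mem, Ideal.mem_span_singleton] at hr
  obtain ⟨k, hk⟩ := hr
  have hk0 : evalSnd t k = 0 := by
    refine (monic_evalSnd_keyRel γ δ s t).mul_right_eq_zero_iff.1 ?_
    rw [← map_mul, ← hk, map_mul]
    simp [evalSnd, Polynomial.algebraMap_eq]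
  obtain ⟨l, rfl⟩ := X_sub_C_dvd_of_evalSnd_eq_zero t hk0
  rw [Ideal.Quotient.eq_zero_iff_mem, Ideal.mem_span_singleton]
  refine ⟨l, sub_eq_zero.1 (X_sub_C_mul_eq_zero t ?_)⟩
  rw [mul_sub, hk]
  ring
end
end

section
/- Let A be a commutative ring, let γ, δ, s, t ∈ A, let q(X,Y) = X² + γXY + δY², let R = A[X,Y]/(q(X,Y) − q(s,t)), and let u, v be the images of X, Y in R. Let α and β be the R-linear endomorphisms of R² given by the matrices α = [[δv + δt + γu, u + s + γt], [−(u − s), v − t]] and β = [[v − t, −(u + s + γt)], [u − s, δv + δt + γu]]. Then the doubly infinite periodic sequence ⋯ → R² →β R² →α R² →β R² → ⋯ is exact; that is, the image of α equals the kernel of β and the image of β equals the kernel of α. -/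
noncomputable section
open MvPolynomial

/-- The quotient map `A[X,Y] → R`. -/
def kmk (A : Type*) [CommRing A] (γ δ s t : A) :
    MvPolynomial (Fin 2) A →+* KeyRing A γ δ s t :=
  Ideal.Quotient.mk (Ideal.span {keyRel A γ δ s t})

/-- The relation becomes a monic polynomial in `X 0` over `A[X 1]`, hence is a non-zero-divisor. -/
theorem isLeftRegular_keyRel {A : Type*} [CommRing A] (γ δ s t : A) :
    IsLeftRegular (keyRel A γ δ s t) := by
  have hmonic : (finSuccEquiv A 1 (keyRel A γ δ s t)).Monic := by
    have h : finSuccEquiv A 1 (keyRel A γ δ s t) = Polynomial.X ^ 2 +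
        (Polynomial.C (C γ * X 0) * Polynomial.X +
          Polynomial.C (C δ * X 0 ^ 2 - C (s ^ 2 + γ * s * t + δ * t ^ 2))) := by
      have h1 : finSuccEquiv A 1 (X 1) = Polynomial.C (X 0) := finSuccEquiv_X_succ (j := 0)
      have hC (a : A) : finSuccEquiv A 1 (C a) = Polynomial.C (C a) := by
        simp [finSuccEquiv_apply]
      simp only [keyRel, map_sub, map_add, map_mul, map_pow, finSuccEquiv_X_zero, h1, hC]
      ring
    rw [h]
    exact Polynomial.monic_X_pow_add (Polynomial.degree_linear_le.trans_lt (by norm_num))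
  intro p q hpq
  apply (finSuccEquiv A 1).injective
  apply hmonic.isRegular.left
  simpa only [map_mul] using congrArg (finSuccEquiv A 1) hpq

open scoped Matrix in
/-- A matrix factorization `M * N = N * M = f` of a non-zero-divisor `f` of `P` becomes exact
over `P ⧸ (f)`. -/
theorem range_mulVecLin_eq_ker_of_mul_eq_smul_one {P n : Type*} [CommRing P] [Fintype n]
    [DecidableEq n] {f : P} (hf : IsLeftRegular f) {M N : Matrix n n P}
    (hMN : M * N = f • (1 : Matrix n n P)) (hNM : N * M = f • (1 : Matrix n n P)) :
    LinearMap.range (M.map (Ideal.Quotient.mk (Ideal.span {f}))).mulVecLin =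
      LinearMap.ker (N.map (Ideal.Quotient.mk (Ideal.span {f}))).mulVecLin := by
  set π := Ideal.Quotient.mk (Ideal.span {f})
  have hπ (L : Matrix n n P) (x : n → P) : L.map π *ᵥ (π ∘ x) = π ∘ (L *ᵥ x) :=
    funext fun i => (RingHom.map_mulVec π L x i).symm
  have hlift (x : n → P ⧸ Ideal.span {f}) : ∃ y : n → P, π ∘ y = x :=
    Ideal.Quotient.mk_surjective.comp_left x
  have hzero : π f = 0 := Ideal.Quotient.eq_zero_iff_mem.mpr (Ideal.mem_span_singleton_self f)
  ext x
  obtain ⟨x, rfl⟩ := hlift x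
  simp only [LinearMap.mem_range, LinearMap.mem_ker, Matrix.mulVecLin_apply]
  constructor
  · rintro ⟨y, hy⟩
    obtain ⟨y, rfl⟩ := hlift y
    rw [← hy, hπ, hπ, Matrix.mulVec_mulVec, hNM, Matrix.smul_mulVec, Matrix.one_mulVec]
    ext i
    simp [hzero]
  · intro hx
    rw [hπ] at hx
    have hdvd (i : n) : ∃ y, (N *ᵥ x) i = f * y :=
      Ideal.mem_span_singleton.mp (Ideal.Quotient.eq_zero_iff_mem.mp (congrFun hx i))
    choose y hy using hdvd
    have hNx : N *ᵥ x = f • y := funext hy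
    have hfx : f • x = f • (M *ᵥ y) := by
      rw [← Matrix.mulVec_smul, ← hNx, Matrix.mulVec_mulVec, hMN, Matrix.smul_mulVec,
        Matrix.one_mulVec]
    have hxy : x = M *ᵥ y := funext fun i => hf (congrFun hfx i)
    exact ⟨π ∘ y, by rw [hπ, hxy]⟩

/-- With `α = [[δv + δt + γu, u + s + γt], [-(u - s), v - t]]` and
`β = [[v - t, -(u + s + γt)], [u - s, δv + δt + γu]]` acting on `R²`, the doubly
infinite periodic sequence `⋯ → R² →β R² →α R² →β R² → ⋯` is exact:
`im α = ker β` and `im β = ker α`. -/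
theorem stmt8 {A : Type*} [CommRing A] (γ δ s t : A)
    (α β : Matrix (Fin 2) (Fin 2) (KeyRing A γ δ s t))
    (hα : α = !![kmk A γ δ s t (C δ * X 1 + C (δ * t) + C γ * X 0),
                 kmk A γ δ s t (X 0 + C s + C (γ * t));
                 kmk A γ δ s t (-(X 0 - C s)), kmk A γ δ s t (X 1 - C t)])
    (hβ : β = !![kmk A γ δ s t (X 1 - C t), kmk A γ δ s t (-(X 0 + C s + C (γ * t)));
                 kmk A γ δ s t (X 0 - C s),
                 kmk A γ δ s t (C δ * X 1 + C (δ * t) + C γ * X 0)]) :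
    LinearMap.range α.mulVecLin = LinearMap.ker β.mulVecLin ∧
    LinearMap.range β.mulVecLin = LinearMap.ker α.mulVecLin := by
  let M : Matrix (Fin 2) (Fin 2) (MvPolynomial (Fin 2) A) :=
    !![C δ * X 1 + C (δ * t) + C γ * X 0, X 0 + C s + C (γ * t); -(X 0 - C s), X 1 - C t]
  let N : Matrix (Fin 2) (Fin 2) (MvPolynomial (Fin 2) A) :=
    !![X 1 - C t, -(X 0 + C s + C (γ * t)); X 0 - C s, C δ * X 1 + C (δ * t) + C γ * X 0]
  have hM : α = M.map (Ideal.Quotient.mk (Ideal.span {keyRel A γ δ s t})) := by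
    rw [hα]
    ext i j
    fin_cases i <;> fin_cases j <;> rfl
  have hN : β = N.map (Ideal.Quotient.mk (Ideal.span {keyRel A γ δ s t})) := by
    rw [hβ]
    ext i j
    fin_cases i <;> fin_cases j <;> rfl
  have hMN : M * N = keyRel A γ δ s t • (1 : Matrix (Fin 2) (Fin 2) _) := by
    ext1 i j
    fin_cases i <;> fin_cases j <;> simp [M, N, keyRel] <;> ring
  have hNM : N * M = keyRel A γ δ s t • (1 : Matrix (Fin 2) (Fin 2) _) := by
    ext1 i j
    fin_cases i <;> fin_cases j <;> simp [M, N, keyRel] <;> ring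
  have hreg := isLeftRegular_keyRel γ δ s t
  rw [hM, hN]
  exact ⟨range_mulVecLin_eq_ker_of_mul_eq_smul_one hreg hMN hNM,
    range_mulVecLin_eq_ker_of_mul_eq_smul_one hreg hNM hMN⟩
end
end

section
/- Let A be a commutative ring, let γ, δ, s, t ∈ A, let q(X,Y) = X² + γXY + δY², let R = A[X,Y]/(q(X,Y) − q(s,t)), and let u, v be the images of X, Y in R. Let β be the R-linear endomorphism of R² given by the matrix [[v − t, −(u + s + γt)], [u − s, δv + δt + γu]]. Then the R-linear map π : R² → R defined by π(a, b) = (u − s)·a − (v − t)·b has image equal to the ideal J = (u − s, v − t) of R and kernel equal to the image of β; consequently the cokernel of β is isomorphic as an R-module to the ideal J. -/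
noncomputable section
open MvPolynomial

/-- The `R`-linear map `R² → R`, `(a, b) ↦ c·a - d·b`. -/
def pairMap {R : Type*} [CommRing R] (c d : R) : (Fin 2 → R) →ₗ[R] R where
  toFun a := c * a 0 - d * a 1
  map_add' a b := by simp [mul_add]; ring
  map_smul' r a := by simp [smul_eq_mul]; ring

/-- `X i - C a` is a left regular element of a multivariate polynomial ring. -/
theorem isLeftRegular_X_sub_C {σ A : Type*} [CommRing A] (i : σ) (a : A) :
    IsLeftRegular (X i - C a : MvPolynomial σ A) := by
  let shift (b : A) : MvPolynomial σ A →ₐ[A] MvPolynomial σ A := aeval fun j => X j + C b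
  have hshift : (shift (-a)).comp (shift a) = AlgHom.id A _ := by
    ext j : 1
    simp [shift, algebraMap_eq]
  have hinj : Function.Injective (shift a) :=
    Function.LeftInverse.injective (g := shift (-a)) fun p => DFunLike.congr_fun hshift p
  have hX : shift a (X i - C a) = X i := by simp [shift, algebraMap_eq]
  intro p r hpr
  apply hinj
  have h := congrArg (shift a) hpr
  simp only [map_mul, hX] at h
  exact (isRegular_X (n := i)).left h

/-- A polynomial that vanishes on substituting `a` for `X i` is divisible by `X i - a`. -/
theorem X_sub_C_dvd_of_aeval_update_eq_zero {σ A : Type*} [CommRing A] [DecidableEq σ] (i : σ)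
    (a : A) (p : MvPolynomial σ A)
    (hp : aeval (Function.update (X : σ → MvPolynomial σ A) i (C a)) p = 0) :
    X i - C a ∣ p := by
  let m := Ideal.Quotient.mkₐ A (Ideal.span {(X i - C a : MvPolynomial σ A)})
  have h : m.comp (aeval (Function.update (X : σ → MvPolynomial σ A) i (C a))) = m := by
    ext j : 1
    by_cases hj : j = i
    · subst hj
      simp only [AlgHom.comp_apply, aeval_X, Function.update_self]
      refine (Ideal.Quotient.eq.2 ?_).symm
      exact Ideal.mem_span_singleton_self _
    · simp [Function.update_of_ne hj]
  have h' := DFunLike.congr_fun h p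
  rw [AlgHom.comp_apply, hp, map_zero] at h'
  exact Ideal.mem_span_singleton.1 (Ideal.Quotient.eq_zero_iff_mem.1 h'.symm)

/-- The only syzygies between `X i - a` and `X j - b`, `i ≠ j`, are the Koszul ones. -/
theorem exists_of_X_sub_C_mul_eq {σ A : Type*} [CommRing A] {i j : σ} (hij : i ≠ j) (a b : A)
    (p r : MvPolynomial σ A) (h : (X i - C a) * p = (X j - C b) * r) :
    ∃ d, p = (X j - C b) * d ∧ r = (X i - C a) * d := by
  classical
  obtain ⟨d, rfl⟩ : X j - C b ∣ p := by
    apply X_sub_C_dvd_of_aeval_update_eq_zero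
    apply isLeftRegular_X_sub_C i a
    have := congrArg (aeval (Function.update (X : σ → MvPolynomial σ A) j (C b))) h
    simpa [Function.update_of_ne hij, algebraMap_eq] using this
  refine ⟨d, rfl, isLeftRegular_X_sub_C j b ?_⟩
  linear_combination -h

/-- The image of `(a, b) ↦ c·a - d·b` is the ideal generated by `c` and `d`. -/
theorem range_pairMap {R : Type*} [CommRing R] (c d : R) :
    LinearMap.range (pairMap c d) = (Ideal.span {c, d} : Ideal R) := by
  ext z
  rw [Ideal.mem_span_pair]
  constructor
  · rintro ⟨a, rfl⟩
    exact ⟨a 0, -a 1, by simp only [pairMap, LinearMap.coe_mk, AddHom.coe_mk]; ring⟩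
  · rintro ⟨a, b, rfl⟩
    exact ⟨![a, -b], by simp [pairMap]; ring⟩

/-- The defining relation lies in the ideal `(X - s, Y - t)`, with explicit cofactors. -/
theorem keyRel_eq {A : Type*} [CommRing A] (γ δ s t : A) :
    keyRel A γ δ s t = (X 0 - C s) * (X 0 + C s + C (γ * t)) +
      (X 1 - C t) * (C δ * X 1 + C (δ * t) + C γ * X 0) := by
  simp only [keyRel, map_add, map_mul, map_pow]
  ring

/-- The map `π : R² → R`, `π(a,b) = (u - s)·a - (v - t)·b`, has image the ideal
`J = (u - s, v - t)` and kernel the image of `β`; hence `coker β ≅ J` as `R`-modules. -/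
theorem stmt9 {A : Type*} [CommRing A] (γ δ s t : A)
    (β : Matrix (Fin 2) (Fin 2) (KeyRing A γ δ s t))
    (hβ : β = !![kmk A γ δ s t (X 1 - C t), kmk A γ δ s t (-(X 0 + C s + C (γ * t)));
                 kmk A γ δ s t (X 0 - C s),
                 kmk A γ δ s t (C δ * X 1 + C (δ * t) + C γ * X 0)]) :
    LinearMap.range (pairMap (kmk A γ δ s t (X 0 - C s)) (kmk A γ δ s t (X 1 - C t)))
        = (Ideal.span {kmk A γ δ s t (X 0 - C s), kmk A γ δ s t (X 1 - C t)} :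
            Ideal (KeyRing A γ δ s t)) ∧
    LinearMap.ker (pairMap (kmk A γ δ s t (X 0 - C s)) (kmk A γ δ s t (X 1 - C t)))
        = LinearMap.range β.mulVecLin ∧
    Nonempty (((Fin 2 → KeyRing A γ δ s t) ⧸ LinearMap.range β.mulVecLin) ≃ₗ[KeyRing A γ δ s t]
      (Ideal.span {kmk A γ δ s t (X 0 - C s), kmk A γ δ s t (X 1 - C t)} :
        Ideal (KeyRing A γ δ s t))) := by
  have hker : LinearMap.ker
      (pairMap (kmk A γ δ s t (X 0 - C s)) (kmk A γ δ s t (X 1 - C t)))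
        = LinearMap.range β.mulVecLin := by
    subst hβ
    ext z
    rw [LinearMap.mem_ker, LinearMap.mem_range]
    constructor
    · intro hz
      obtain ⟨a, ha⟩ := Ideal.Quotient.mk_surjective (z 0)
      obtain ⟨b, hb⟩ := Ideal.Quotient.mk_surjective (z 1)
      change kmk A γ δ s t a = z 0 at ha
      change kmk A γ δ s t b = z 1 at hb
      simp only [pairMap, LinearMap.coe_mk, AddHom.coe_mk] at hz
      rw [← ha, ← hb, ← map_mul, ← map_mul, ← map_sub] at hz
      obtain ⟨c, hc⟩ := Ideal.mem_span_singleton.1 (Ideal.Quotient.eq_zero_iff_mem.1 hz)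
      rw [keyRel_eq] at hc
      obtain ⟨d, hd₀, hd₁⟩ := exists_of_X_sub_C_mul_eq (i := (0 : Fin 2)) (j := 1) (by decide) s t
        (a - (X 0 + C s + C (γ * t)) * c) (b + (C δ * X 1 + C (δ * t) + C γ * X 0) * c)
        (by linear_combination hc)
      refine ⟨![kmk A γ δ s t d, kmk A γ δ s t (-c)], ?_⟩
      ext k
      fin_cases k
      · simp only [Matrix.mulVecLin_apply, Matrix.mulVec, dotProduct, Fin.sum_univ_two]
        change kmk A γ δ s t _ * kmk A γ δ s t _ + kmk A γ δ s t _ * kmk A γ δ s t _ = z 0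
        rw [← ha, ← map_mul, ← map_mul, ← map_add]
        congr 1
        linear_combination -hd₀
      · simp only [Matrix.mulVecLin_apply, Matrix.mulVec, dotProduct, Fin.sum_univ_two]
        change kmk A γ δ s t _ * kmk A γ δ s t _ + kmk A γ δ s t _ * kmk A γ δ s t _ = z 1
        rw [← hb, ← map_mul, ← map_mul, ← map_add]
        congr 1
        linear_combination -hd₁
    · rintro ⟨w, rfl⟩
      have hrel : kmk A γ δ s t (keyRel A γ δ s t) = 0 :=
        Ideal.Quotient.eq_zero_iff_mem.2 (Ideal.mem_span_singleton_self _)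
      have hrel' := (congrArg (kmk A γ δ s t) (keyRel_eq γ δ s t)).symm.trans hrel
      rw [map_add, map_mul (kmk A γ δ s t), map_mul (kmk A γ δ s t)] at hrel'
      simp only [pairMap, LinearMap.coe_mk, AddHom.coe_mk, Matrix.mulVecLin_apply, Matrix.mulVec,
        dotProduct, Fin.sum_univ_two, Matrix.of_apply, Matrix.cons_val_zero, Matrix.cons_val_one,
        map_neg]
      linear_combination -(w 1) * hrel'
  have hrange := range_pairMap (kmk A γ δ s t (X 0 - C s)) (kmk A γ δ s t (X 1 - C t))
  exact ⟨hrange, hker, ⟨(Submodule.quotEquivOfEq _ _ hker.symm).trans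
    ((LinearMap.quotKerEquivRange _).trans (LinearEquiv.ofEq _ _ hrange))⟩⟩
end
end

section
/- Let A be a commutative ring, let γ, δ, s, t ∈ A, let q(X,Y) = X² + γXY + δY², let R = A[X,Y]/(q(X,Y) − q(s,t)), and let u, v be the images of X, Y in R. Let Q(R) be the localization of R at its multiplicative set of non-zero-divisors, with canonical map ι : R → Q(R), and let ε = ι(u + s + γt)·ι(v − t)⁻¹ ∈ Q(R) (well defined because v − t is a non-zero-divisor of R, so ι(v − t) is invertible in Q(R)). Then ε·ι(v − t) = ι(u + s + γt) and ε·ι(u − s) = −ι(δv + δt + γu); consequently ε·ι(j) lies in the image of ι for every element j of the ideal J = (u − s, v − t). -/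
noncomputable section
open MvPolynomial

/-- The canonical map `ι : R → Q(R)` into the total quotient ring (the localization of
`R` at its non-zero-divisors). -/
def keyι (A : Type*) [CommRing A] (γ δ s t : A) :
    KeyRing A γ δ s t →+* FractionRing (KeyRing A γ δ s t) :=
  algebraMap _ _

/-- `ε = ι(u + s + γt)·ι(v - t)⁻¹ ∈ Q(R)` (`ι(v - t)` is a unit in `Q(R)` since `v - t`
is a non-zero-divisor of `R`, so `Ring.inverse` computes its genuine inverse). -/
def keyEps (A : Type*) [CommRing A] (γ δ s t : A) : FractionRing (KeyRing A γ δ s t) :=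
  keyι A γ δ s t (kmk A γ δ s t (X 0 + C s + C (γ * t)))
    * Ring.inverse (keyι A γ δ s t (kmk A γ δ s t (X 1 - C t)))

/-- A polynomial over `A` in two variables that vanishes on the line `Y = t` is a multiple
of `Y - t`. -/
theorem X_one_sub_C_dvd_of_aeval_eq_zero {A : Type*} [CommRing A] (t : A)
    (g : MvPolynomial (Fin 2) A)
    (hg : aeval ![(Polynomial.X : Polynomial A), Polynomial.C t] g = 0) :
    (X 1 - C t : MvPolynomial (Fin 2) A) ∣ g := by
  let π := Ideal.Quotient.mkₐ A (Ideal.span {(X 1 - C t : MvPolynomial (Fin 2) A)})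
  have hπ : (π.comp (Polynomial.aeval (X 0 : MvPolynomial (Fin 2) A))).comp
      (aeval ![(Polynomial.X : Polynomial A), Polynomial.C t]) = π := by
    ext i
    fin_cases i
    · simp
    · have hY : π (X 1 - C t) = 0 :=
        Ideal.Quotient.eq_zero_iff_mem.mpr (Ideal.mem_span_singleton_self _)
      rw [map_sub, sub_eq_zero] at hY
      simpa using hY.symm
  rw [← Ideal.mem_span_singleton, ← Ideal.Quotient.eq_zero_iff_mem]
  change π g = 0
  rw [← hπ]
  simp [hg]

theorem X_one_sub_C_mem_nonZeroDivisors {A : Type*} [CommRing A] (t : A) :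
    (X 1 - C t : MvPolynomial (Fin 2) A) ∈ nonZeroDivisors (MvPolynomial (Fin 2) A) := by
  rw [mem_nonZeroDivisors_iff_right]
  intro f hf
  let σ : MvPolynomial (Fin 2) A →ₐ[A] MvPolynomial (Fin 2) A := aeval ![X 0, X 1 + C t]
  let τ : MvPolynomial (Fin 2) A →ₐ[A] MvPolynomial (Fin 2) A := aeval ![X 0, X 1 - C t]
  have hτσ : τ.comp σ = AlgHom.id A _ := by
    ext i : 1
    fin_cases i <;> simp [σ, τ, ← MvPolynomial.algebraMap_eq]
  have hσf : σ f * X 1 = 0 := by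
    simpa [σ, ← MvPolynomial.algebraMap_eq] using congrArg σ hf
  have hσ : σ f = 0 := isRegular_X.right (hσf.trans (zero_mul _).symm)
  simpa [hσ] using (DFunLike.congr_fun hτσ f).symm

theorem kmk_X_one_sub_C_mem_nonZeroDivisors {A : Type*} [CommRing A] (γ δ s t : A) :
    kmk A γ δ s t (X 1 - C t) ∈ nonZeroDivisors (KeyRing A γ δ s t) := by
  rw [mem_nonZeroDivisors_iff_right]
  intro r hr
  obtain ⟨f, rfl⟩ := Ideal.Quotient.mk_surjective r
  change kmk A γ δ s t f * _ = 0 at hr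
  rw [← map_mul] at hr
  obtain ⟨g, hg⟩ := Ideal.mem_span_singleton.mp (Ideal.Quotient.eq_zero_iff_mem.mp hr)
  let φ : MvPolynomial (Fin 2) A →ₐ[A] Polynomial A := aeval ![Polynomial.X, Polynomial.C t]
  have hmonic : (φ (keyRel A γ δ s t)).Monic := by
    have hφ : φ (keyRel A γ δ s t) = Polynomial.X ^ 2 + (Polynomial.C (γ * t) * Polynomial.X
        + Polynomial.C (- (s ^ 2 + γ * s * t))) := by
      simp [φ, keyRel, Polynomial.algebraMap_eq]
      ring
    rw [hφ]
    exact Polynomial.monic_X_pow_add (Polynomial.degree_linear_le.trans_lt (by norm_num))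
  have hφg : φ g = 0 := by
    rw [← hmonic.mul_right_eq_zero_iff, ← map_mul, ← hg]
    simp [φ, Polynomial.algebraMap_eq]
  obtain ⟨h, rfl⟩ := X_one_sub_C_dvd_of_aeval_eq_zero t g hφg
  have hf : f - keyRel A γ δ s t * h = 0 :=
    (mem_nonZeroDivisors_iff_right.mp (X_one_sub_C_mem_nonZeroDivisors t)) _ (by
      linear_combination hg)
  exact Ideal.Quotient.eq_zero_iff_mem.mpr
    (Ideal.mem_span_singleton.mpr ⟨h, sub_eq_zero.mp hf⟩)

/-- The relation `(u + s + γt)(u - s) = -(δv + δt + γu)(v - t)` in `R`. -/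
theorem kmk_mul_kmk_X_zero_sub_C {A : Type*} [CommRing A] (γ δ s t : A) :
    kmk A γ δ s t (X 0 + C s + C (γ * t)) * kmk A γ δ s t (X 0 - C s)
      = -kmk A γ δ s t (C δ * X 1 + C (δ * t) + C γ * X 0) * kmk A γ δ s t (X 1 - C t) := by
  rw [← map_neg, ← map_mul, ← map_mul]
  refine Ideal.Quotient.eq.mpr (Ideal.mem_span_singleton.mpr ⟨1, ?_⟩)
  simp only [keyRel, map_add, map_mul, map_pow]
  ring

set_option synthInstance.maxHeartbeats 1000000 in
/-- `ε·ι(v - t) = ι(u + s + γt)`, `ε·ι(u - s) = -ι(δv + δt + γu)`, and consequently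
`ε·ι(j)` lies in the image of `ι` for every `j` in the ideal `J = (u - s, v - t)`. -/
theorem stmt11 {A : Type*} [CommRing A] (γ δ s t : A) :
    keyEps A γ δ s t * keyι A γ δ s t (kmk A γ δ s t (X 1 - C t))
        = keyι A γ δ s t (kmk A γ δ s t (X 0 + C s + C (γ * t))) ∧
    keyEps A γ δ s t * keyι A γ δ s t (kmk A γ δ s t (X 0 - C s))
        = -keyι A γ δ s t (kmk A γ δ s t (C δ * X 1 + C (δ * t) + C γ * X 0)) ∧
    ∀ j ∈ Ideal.span {kmk A γ δ s t (X 0 - C s), kmk A γ δ s t (X 1 - C t)},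
      keyEps A γ δ s t * keyι A γ δ s t j ∈ Set.range (keyι A γ δ s t) := by
  have hunit : IsUnit (keyι A γ δ s t (kmk A γ δ s t (X 1 - C t))) :=
    IsLocalization.map_units (FractionRing (KeyRing A γ δ s t))
      ⟨_, kmk_X_one_sub_C_mem_nonZeroDivisors γ δ s t⟩
  have hv : keyEps A γ δ s t * keyι A γ δ s t (kmk A γ δ s t (X 1 - C t))
      = keyι A γ δ s t (kmk A γ δ s t (X 0 + C s + C (γ * t))) := by
    rw [keyEps, mul_assoc, Ring.inverse_mul_cancel _ hunit, mul_one]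
  have hu : keyEps A γ δ s t * keyι A γ δ s t (kmk A γ δ s t (X 0 - C s))
      = -keyι A γ δ s t (kmk A γ δ s t (C δ * X 1 + C (δ * t) + C γ * X 0)) := by
    apply hunit.mul_right_cancel
    rw [mul_right_comm, hv, ← map_mul, kmk_mul_kmk_X_zero_sub_C, map_mul, map_neg]
  refine ⟨hv, hu, fun j hj => ?_⟩
  obtain ⟨a, b, rfl⟩ := Ideal.mem_span_pair.mp hj
  refine ⟨a * -kmk A γ δ s t (C δ * X 1 + C (δ * t) + C γ * X 0)
    + b * kmk A γ δ s t (X 0 + C s + C (γ * t)), ?_⟩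
  rw [map_add (keyι A γ δ s t), map_add (keyι A γ δ s t)]
  simp only [map_mul (keyι A γ δ s t), map_neg (keyι A γ δ s t)]
  rw [← hu, ← hv]
  ring
end
end

section
/- Let A be a commutative ring, let γ, δ, s, t ∈ A with γ² − 4δ a unit in A, let q(X,Y) = X² + γXY + δY², let R = A[X,Y]/(q(X,Y) − q(s,t)), and let u, v be the images of X, Y in R. Let Q(R) be the total quotient ring of R with canonical map ι : R → Q(R), and let ε = ι(u + s + γt)·ι(v − t)⁻¹ ∈ Q(R). Then for every r ∈ R, the product ε·ι(r) lies in the image of ι if and only if r belongs to the ideal J = (u − s, v − t). In particular, the map A → (R + R·ε)/ι(R) sending a ∈ A to the class of ι(a)·ε is bijective, i.e. the quotient J∨/R is a free A-module of rank one generated by the class of ε. -/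
set_option synthInstance.maxHeartbeats 1000000
set_option maxHeartbeats 2000000

noncomputable section
open MvPolynomial

/-- The `R`-submodule `R + R·ε` of `Q(R)`. -/
def keyP (A : Type*) [CommRing A] (γ δ s t : A) :
    Submodule (KeyRing A γ δ s t) (FractionRing (KeyRing A γ δ s t)) :=
  Submodule.span _ {1, keyEps A γ δ s t}

namespace KeyRing

variable {A : Type*} [CommRing A]

/-- Restriction of a polynomial in two variables to the line `Y = t`. -/
def restrictLine (t : A) : MvPolynomial (Fin 2) A →ₐ[A] Polynomial A :=
  aeval ![Polynomial.X, Polynomial.C t]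

@[simp] lemma restrictLine_X_zero (t : A) : restrictLine t (X 0) = Polynomial.X := by
  simp [restrictLine]

@[simp] lemma restrictLine_X_one (t : A) : restrictLine t (X 1) = Polynomial.C t := by
  simp [restrictLine]

@[simp] lemma restrictLine_C (t a : A) : restrictLine t (C a) = Polynomial.C a := by
  simp [restrictLine]

lemma X_one_sub_C_dvd_sub_restrictLine (t : A) (f : MvPolynomial (Fin 2) A) :
    X 1 - C t ∣ f - Polynomial.aeval (X 0) (restrictLine t f) := by
  rw [← Ideal.mem_span_singleton, ← Ideal.Quotient.eq]
  have key : (Ideal.Quotient.mkₐ A (Ideal.span {(X 1 - C t : MvPolynomial (Fin 2) A)})) =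
      ((Ideal.Quotient.mkₐ A (Ideal.span {(X 1 - C t : MvPolynomial (Fin 2) A)})).comp
        (Polynomial.aeval (X 0))).comp (restrictLine t) := by
    apply MvPolynomial.algHom_ext
    intro i
    fin_cases i
    · simp
    · simp [Ideal.Quotient.eq, MvPolynomial.algebraMap_eq]
  exact DFunLike.congr_fun key f

lemma X_one_sub_C_dvd_of_restrictLine_eq_zero {t : A} {f : MvPolynomial (Fin 2) A}
    (hf : restrictLine t f = 0) : X 1 - C t ∣ f := by
  simpa [hf] using X_one_sub_C_dvd_sub_restrictLine t f

lemma eq_zero_of_X_one_sub_C_mul_eq_zero {t : A} {f : MvPolynomial (Fin 2) A}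
    (hf : (X 1 - C t) * f = 0) : f = 0 := by
  let τ : A → MvPolynomial (Fin 2) A →ₐ[A] MvPolynomial (Fin 2) A :=
    fun c => aeval ![X 0, X 1 + C c]
  have hτ : (τ (-t)).comp (τ t) = AlgHom.id A _ := by
    apply MvPolynomial.algHom_ext
    intro i
    fin_cases i <;> simp [τ]
  have h : X 1 * τ t f = 0 := by simpa [τ] using congrArg (τ t) hf
  have h' : τ t f = 0 := isRegular_X.left.mul_left_eq_zero_iff.1 h
  simpa [h'] using (DFunLike.congr_fun hτ f).symm

variable (γ δ s t : A)

lemma restrictLine_keyRel : restrictLine t (keyRel A γ δ s t) =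
    (Polynomial.X - Polynomial.C s) * (Polynomial.X + Polynomial.C (s + γ * t)) := by
  simp [keyRel]
  ring

lemma exists_eq_kmk (r : KeyRing A γ δ s t) : ∃ f, kmk A γ δ s t f = r :=
  Ideal.Quotient.mk_surjective r

lemma kmk_eq_zero_iff {f : MvPolynomial (Fin 2) A} :
    kmk A γ δ s t f = 0 ↔ ∃ g, f = keyRel A γ δ s t * g := by
  rw [kmk, Ideal.Quotient.eq_zero_iff_mem, Ideal.mem_span_singleton, Dvd.dvd]
  rfl

lemma kmk_X_one_sub_C_mem_nonZeroDivisors :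
    kmk A γ δ s t (X 1 - C t) ∈ nonZeroDivisors (KeyRing A γ δ s t) := by
  rw [mem_nonZeroDivisors_iff_right]
  intro r hr
  obtain ⟨f, rfl⟩ := exists_eq_kmk γ δ s t r
  rw [← map_mul, kmk_eq_zero_iff] at hr
  obtain ⟨g, hg⟩ := hr
  have h := congrArg (restrictLine t) hg
  rw [map_mul, map_mul, map_sub, restrictLine_X_one, restrictLine_C, sub_self, mul_zero,
    restrictLine_keyRel] at h
  have hmonic := (Polynomial.monic_X_sub_C s).mul (Polynomial.monic_X_add_C (s + γ * t))
  obtain ⟨k, rfl⟩ := X_one_sub_C_dvd_of_restrictLine_eq_zero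
    ((hmonic.isRegular.left.mul_left_eq_zero_iff).1 h.symm)
  refine (kmk_eq_zero_iff γ δ s t).2 ⟨k, sub_eq_zero.1 ?_⟩
  refine eq_zero_of_X_one_sub_C_mul_eq_zero (t := t) ?_
  linear_combination hg

lemma mem_span_of_mul_eq_mul {r r' : KeyRing A γ δ s t}
    (h : kmk A γ δ s t (X 0 + C s + C (γ * t)) * r = kmk A γ δ s t (X 1 - C t) * r') :
    r ∈ Ideal.span {kmk A γ δ s t (X 0 - C s), kmk A γ δ s t (X 1 - C t)} := by
  obtain ⟨f, rfl⟩ := exists_eq_kmk γ δ s t r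
  obtain ⟨f', rfl⟩ := exists_eq_kmk γ δ s t r'
  rw [← map_mul, ← map_mul, ← sub_eq_zero, ← map_sub, kmk_eq_zero_iff] at h
  obtain ⟨g, hg⟩ := h
  have h := congrArg (restrictLine t) hg
  simp only [map_mul, map_sub, map_add, restrictLine_keyRel, restrictLine_X_zero,
    restrictLine_X_one, restrictLine_C] at h
  have hcancel : restrictLine t f =
      (Polynomial.X - Polynomial.C s) * restrictLine t g := by
    apply (Polynomial.monic_X_add_C (s + γ * t)).isRegular.left
    simp only [map_add, map_mul] at h ⊢
    linear_combination h
  obtain ⟨k, hk⟩ := X_one_sub_C_dvd_of_restrictLine_eq_zero (t := t)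
    (f := f - (X 0 - C s) * g) (by simp [hcancel])
  rw [Ideal.mem_span_pair]
  refine ⟨kmk A γ δ s t g, kmk A γ δ s t k, ?_⟩
  rw [← map_mul, ← map_mul, ← map_add]
  congr 1
  linear_combination -hk

lemma kmk_mul_kmk_X_zero_sub_C :
    kmk A γ δ s t (X 0 + C s + C (γ * t)) * kmk A γ δ s t (X 0 - C s) =
      kmk A γ δ s t (X 1 - C t) * kmk A γ δ s t (-(C γ * X 0 + C δ * (X 1 + C t))) := by
  rw [← map_mul, ← map_mul, ← sub_eq_zero, ← map_sub, kmk_eq_zero_iff]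
  refine ⟨1, ?_⟩
  simp only [keyRel, map_add, map_mul, map_pow]
  ring

lemma isUnit_keyι : IsUnit (keyι A γ δ s t (kmk A γ δ s t (X 1 - C t))) :=
  IsLocalization.map_units (FractionRing (KeyRing A γ δ s t))
    ⟨_, kmk_X_one_sub_C_mem_nonZeroDivisors γ δ s t⟩

lemma keyι_injective : Function.Injective (keyι A γ δ s t) :=
  IsFractionRing.injective _ _

lemma keyEps_mul_keyι_eq_iff (r r' : KeyRing A γ δ s t) :
    keyEps A γ δ s t * keyι A γ δ s t r = keyι A γ δ s t r' ↔
      kmk A γ δ s t (X 0 + C s + C (γ * t)) * r = kmk A γ δ s t (X 1 - C t) * r' := by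
  have hinv := Ring.mul_inverse_cancel _ (isUnit_keyι γ δ s t)
  rw [← (keyι_injective γ δ s t).eq_iff, map_mul (keyι A γ δ s t),
    map_mul (keyι A γ δ s t), ← (isUnit_keyι γ δ s t).mul_right_inj, keyEps]
  set d := keyι A γ δ s t (kmk A γ δ s t (X 1 - C t))
  set n := keyι A γ δ s t (kmk A γ δ s t (X 0 + C s + C (γ * t)))
  rw [show d * (n * Ring.inverse d * keyι A γ δ s t r) =
    d * Ring.inverse d * (n * keyι A γ δ s t r) by ring, hinv, one_mul]

lemma keyEps_mul_mem_range_iff (r : KeyRing A γ δ s t) :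
    keyEps A γ δ s t * keyι A γ δ s t r ∈ Set.range (keyι A γ δ s t) ↔
      r ∈ Ideal.span {kmk A γ δ s t (X 0 - C s), kmk A γ δ s t (X 1 - C t)} := by
  constructor
  · rintro ⟨r', hr'⟩
    exact mem_span_of_mul_eq_mul γ δ s t ((keyEps_mul_keyι_eq_iff γ δ s t r r').1 hr'.symm)
  · rw [Ideal.mem_span_pair]
    rintro ⟨a, b, rfl⟩
    refine ⟨a * kmk A γ δ s t (-(C γ * X 0 + C δ * (X 1 + C t))) +
      b * kmk A γ δ s t (X 0 + C s + C (γ * t)), ((keyEps_mul_keyι_eq_iff γ δ s t _ _).2 ?_).symm⟩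
    linear_combination a * kmk_mul_kmk_X_zero_sub_C γ δ s t

/-- Evaluation at the point `(s, t)` of the conic. -/
def evalPoint : KeyRing A γ δ s t →ₐ[A] A :=
  Ideal.Quotient.liftₐ _ (aeval ![s, t]) fun f hf => by
    obtain ⟨g, rfl⟩ := Ideal.mem_span_singleton.1 hf
    simp [keyRel]

lemma evalPoint_kmk (f : MvPolynomial (Fin 2) A) :
    evalPoint γ δ s t (kmk A γ δ s t f) = aeval ![s, t] f := rfl

lemma evalPoint_eq_zero_of_mem {r : KeyRing A γ δ s t}
    (hr : r ∈ Ideal.span {kmk A γ δ s t (X 0 - C s), kmk A γ δ s t (X 1 - C t)}) :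
    evalPoint γ δ s t r = 0 := by
  obtain ⟨a, b, rfl⟩ := Ideal.mem_span_pair.1 hr
  simp [evalPoint_kmk]

lemma sub_algebraMap_evalPoint_mem (r : KeyRing A γ δ s t) :
    r - algebraMap A _ (evalPoint γ δ s t r) ∈
      Ideal.span {kmk A γ δ s t (X 0 - C s), kmk A γ δ s t (X 1 - C t)} := by
  obtain ⟨f, rfl⟩ := exists_eq_kmk γ δ s t r
  have hC (a : A) : algebraMap A (KeyRing A γ δ s t) a = kmk A γ δ s t (C a) := rfl
  simp only [evalPoint_kmk, hC]
  set J := Ideal.span {kmk A γ δ s t (X 0 - C s), kmk A γ δ s t (X 1 - C t)}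
  have hX : ∀ i, kmk A γ δ s t (X i - C (![s, t] i)) ∈ J :=
    Fin.forall_fin_two.2 ⟨Ideal.subset_span (Or.inl rfl), Ideal.subset_span (Or.inr rfl)⟩
  induction f using MvPolynomial.induction_on with
  | C a => simp
  | add p q hp hq =>
    convert J.add_mem hp hq using 1
    simp only [map_add]
    ring
  | mul_X p i hp =>
    convert J.add_mem (J.mul_mem_right (kmk A γ δ s t (X i)) hp)
      (J.mul_mem_left (kmk A γ δ s t (C (aeval ![s, t] p))) (hX i)) using 1
    simp only [map_mul, map_sub, aeval_X]
    ring

end KeyRing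

/-- If `γ² - 4δ` is a unit then `ε·ι(r) ∈ ι(R)` exactly when `r ∈ J = (u - s, v - t)`;
moreover the map `A → (R + R·ε)/ι(R)`, `a ↦ [ι(a)·ε]`, is bijective (stated unfolded:
it is injective, and every element of `R + R·ε` is congruent mod `ι(R)` to `ι(a)·ε`
for some `a ∈ A`), i.e. `J∨/R` is a free `A`-module of rank one generated by the
class of `ε`. -/
theorem stmt12 {A : Type*} [CommRing A] (γ δ s t : A)
    (hdisc : IsUnit (γ ^ 2 - 4 * δ)) :
    (∀ r : KeyRing A γ δ s t,
      keyEps A γ δ s t * keyι A γ δ s t r ∈ Set.range (keyι A γ δ s t) ↔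
        r ∈ Ideal.span {kmk A γ δ s t (X 0 - C s), kmk A γ δ s t (X 1 - C t)}) ∧
    (∀ a b : A, (∃ r : KeyRing A γ δ s t,
        keyι A γ δ s t r = (keyι A γ δ s t (algebraMap A (KeyRing A γ δ s t) a)
          - keyι A γ δ s t (algebraMap A (KeyRing A γ δ s t) b)) * keyEps A γ δ s t)
      → a = b) ∧
    (∀ w ∈ keyP A γ δ s t, ∃ a : A, ∃ r : KeyRing A γ δ s t,
        w = keyι A γ δ s t r
          + keyι A γ δ s t (algebraMap A (KeyRing A γ δ s t) a) * keyEps A γ δ s t) := by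
  refine ⟨KeyRing.keyEps_mul_mem_range_iff γ δ s t, ?_, ?_⟩
  · rintro a b ⟨r, hr⟩
    have hmem := (KeyRing.keyEps_mul_mem_range_iff γ δ s t
      (algebraMap A (KeyRing A γ δ s t) (a - b))).1 ⟨r, by rw [hr, map_sub, map_sub, mul_comm]⟩
    simpa [sub_eq_zero] using KeyRing.evalPoint_eq_zero_of_mem γ δ s t hmem
  · intro w hw
    obtain ⟨p, r, rfl⟩ := Submodule.mem_span_pair.1 hw
    obtain ⟨r', hr'⟩ := (KeyRing.keyEps_mul_mem_range_iff γ δ s t _).2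
      (KeyRing.sub_algebraMap_evalPoint_mem γ δ s t r)
    refine ⟨KeyRing.evalPoint γ δ s t r, p + r', ?_⟩
    have hsmul (x : KeyRing A γ δ s t) (y : FractionRing (KeyRing A γ δ s t)) :
        x • y = keyι A γ δ s t x * y := Algebra.smul_def x y
    rw [map_add, hr', map_sub, hsmul, hsmul]
    ring
end
end

section
/- Let A be a commutative ring, let γ, δ, s, t ∈ A with γ² − 4δ a unit in A, let q(X,Y) = X² + γXY + δY², let R = A[X,Y]/(q(X,Y) − q(s,t)), and let u, v be the images of X, Y in R. Let Q(R) be the total quotient ring of R with canonical map ι : R → Q(R), let ε = ι(u + s + γt)·ι(v − t)⁻¹ ∈ Q(R), and let J = (u − s, v − t) be the ideal of R generated by u − s and v − t. Then every element of Q(R) which multiplies ι(J) into ι(R) lies in ι(R) + ι(R)·ε; that is, if w ∈ Q(R) satisfies w·ι(j) ∈ ι(R) for all j ∈ J, then there exist r, a ∈ R with w = ι(r) + ι(a)·ε. -/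
set_option synthInstance.maxHeartbeats 1000000
set_option maxHeartbeats 2000000

noncomputable section
open MvPolynomial

/-- The specialization `A[X,Y] → A[X]`, `Y ↦ t`. -/
def specY {A : Type*} [CommRing A] (t : A) : MvPolynomial (Fin 2) A →ₐ[A] Polynomial A :=
  aeval ![Polynomial.X, Polynomial.C t]

theorem specY_X_zero {A : Type*} [CommRing A] (t : A) : specY t (X 0) = Polynomial.X := by
  simp [specY]

theorem specY_X_one {A : Type*} [CommRing A] (t : A) : specY t (X 1) = Polynomial.C t := by
  simp [specY]

theorem specY_C {A : Type*} [CommRing A] (t a : A) : specY t (C a) = Polynomial.C a := by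
  simp [specY]

theorem X_one_sub_C_dvd_of_specY_eq_zero {A : Type*} [CommRing A] {t : A}
    {f : MvPolynomial (Fin 2) A} (hf : specY t f = 0) : X 1 - C t ∣ f := by
  let I : Ideal (MvPolynomial (Fin 2) A) := Ideal.span {X 1 - C t}
  let π : MvPolynomial (Fin 2) A →ₐ[A] MvPolynomial (Fin 2) A ⧸ I := Ideal.Quotient.mkₐ A I
  have hπ : (π.comp (Polynomial.aeval (X 0))).comp (specY t) = π := by
    refine MvPolynomial.algHom_ext fun i => ?_
    fin_cases i
    · simp [specY_X_zero]
    · have h : X 1 - C t ∈ I := Ideal.mem_span_singleton_self _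
      simpa [specY_X_one, π] using (Ideal.Quotient.eq.mpr h).symm
  have h := DFunLike.congr_fun hπ f
  simp only [AlgHom.comp_apply, hf, map_zero] at h
  exact Ideal.mem_span_singleton.mp (Ideal.Quotient.eq_zero_iff_mem.mp h.symm)

theorem eq_zero_of_X_one_sub_C_mul_eq_zero {A : Type*} [CommRing A] {t : A}
    {f : MvPolynomial (Fin 2) A} (hf : (X 1 - C t) * f = 0) : f = 0 := by
  let shift (a : A) : MvPolynomial (Fin 2) A →ₐ[A] MvPolynomial (Fin 2) A :=
    aeval ![X 0, X 1 + C a]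
  have hshift : (shift (-t)).comp (shift t) = AlgHom.id A _ := by
    refine MvPolynomial.algHom_ext fun i => ?_
    fin_cases i <;> simp [shift, algebraMap_eq]
  have h := congrArg (shift t) hf
  have hX : shift t (X 1 - C t) = X 1 := by simp [shift, algebraMap_eq]
  rw [map_mul, hX, map_zero] at h
  have h' : shift t f = 0 := by
    refine (MvPolynomial.isRegular_X (n := 1)).left ?_
    simpa using h
  simpa [h'] using (DFunLike.congr_fun hshift f).symm

theorem specY_keyRel {A : Type*} [CommRing A] (γ δ s t : A) :
    specY t (keyRel A γ δ s t) =
      (Polynomial.X - Polynomial.C s) * (Polynomial.X + Polynomial.C (s + γ * t)) := by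
  simp only [keyRel, map_sub, map_add, map_mul, map_pow, specY_X_zero, specY_X_one, specY_C]
  ring

theorem kmk_eq_zero_iff {A : Type*} [CommRing A] (γ δ s t : A) (f : MvPolynomial (Fin 2) A) :
    kmk A γ δ s t f = 0 ↔ keyRel A γ δ s t ∣ f :=
  Ideal.Quotient.eq_zero_iff_mem.trans Ideal.mem_span_singleton

/-- If `b(u - s) ∈ (v - t)`, then `b ∈ (v - t, u + s + γt)`. -/
theorem exists_eq_add_of_mul_eq_mul {A : Type*} [CommRing A] (γ δ s t : A)
    {b c : KeyRing A γ δ s t}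
    (h : b * kmk A γ δ s t (X 0 - C s) = c * kmk A γ δ s t (X 1 - C t)) :
    ∃ r a : KeyRing A γ δ s t,
      b = r * kmk A γ δ s t (X 1 - C t) + a * kmk A γ δ s t (X 0 + C s + C (γ * t)) := by
  obtain ⟨f, rfl⟩ : ∃ f, kmk A γ δ s t f = b := Ideal.Quotient.mk_surjective b
  obtain ⟨k, rfl⟩ : ∃ k, kmk A γ δ s t k = c := Ideal.Quotient.mk_surjective c
  rw [← map_mul, ← map_mul, ← sub_eq_zero, ← map_sub, kmk_eq_zero_iff] at h
  obtain ⟨g, hg⟩ := h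
  have hg' := congrArg (specY t) hg
  simp only [map_mul, specY_keyRel, map_sub, specY_X_zero, specY_X_one, specY_C] at hg'
  have hf : specY t f = (Polynomial.X + Polynomial.C (s + γ * t)) * specY t g := by
    refine (Polynomial.monic_X_sub_C s).isRegular.left ?_
    linear_combination hg'
  have h0 : specY t (f - g * (X 0 + C s + C (γ * t))) = 0 := by
    simp only [map_mul, map_sub, map_add, specY_X_zero, specY_C] at hf ⊢
    linear_combination hf
  obtain ⟨r, hr⟩ := X_one_sub_C_dvd_of_specY_eq_zero h0
  refine ⟨kmk A γ δ s t r, kmk A γ δ s t g, ?_⟩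
  rw [← map_mul, ← map_mul, ← map_add]
  congr 1
  linear_combination hr

/-- If `γ² - 4δ` is a unit, every element of the total quotient ring `Q(R)` that
multiplies the ideal `J = (u - s, v - t)` into `ι(R)` lies in `ι(R) + ι(R)·ε`. -/
theorem stmt13 {A : Type*} [CommRing A] (γ δ s t : A)
    (hdisc : IsUnit (γ ^ 2 - 4 * δ)) (w : FractionRing (KeyRing A γ δ s t))
    (hw : ∀ j ∈ Ideal.span {kmk A γ δ s t (X 0 - C s), kmk A γ δ s t (X 1 - C t)},
      w * keyι A γ δ s t j ∈ Set.range (keyι A γ δ s t)) :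
    ∃ r a : KeyRing A γ δ s t,
      w = keyι A γ δ s t r + keyι A γ δ s t a * keyEps A γ δ s t := by
  obtain ⟨c, hc⟩ := hw _ (Ideal.subset_span (Set.mem_insert _ _))
  obtain ⟨b, hb⟩ := hw _ (Ideal.subset_span (Set.mem_insert_of_mem _ rfl))
  have hbc : b * kmk A γ δ s t (X 0 - C s) = c * kmk A γ δ s t (X 1 - C t) := by
    apply IsFractionRing.injective (KeyRing A γ δ s t) (FractionRing (KeyRing A γ δ s t))
    change keyι A γ δ s t _ = keyι A γ δ s t _
    rw [map_mul, map_mul, hb, hc]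
    ring
  obtain ⟨r, a, hra⟩ := exists_eq_add_of_mul_eq_mul γ δ s t hbc
  have hunit : IsUnit (keyι A γ δ s t (kmk A γ δ s t (X 1 - C t))) :=
    IsLocalization.map_units _
      (⟨_, kmk_X_one_sub_C_mem_nonZeroDivisors γ δ s t⟩ : nonZeroDivisors (KeyRing A γ δ s t))
  refine ⟨r, a, hunit.mul_right_cancel ?_⟩
  rw [← hb, hra, keyEps, add_mul, map_add, map_mul, map_mul, mul_assoc, mul_assoc,
    Ring.inverse_mul_cancel _ hunit, mul_one]
end
end

section
/- Let A be a commutative ring and let γ, δ, s, t ∈ A. Let R₁ = A[u, x]/(u(δx² − γx + 1) + s(δx² − 1) + tδ(γx² − 2x)), the quotient of the polynomial ring in two variables u, x over A by the principal ideal generated by the indicated element. Then the localization of R₁ away from the image of δx² − γx + 1 is isomorphic, as an A[x]-algebra, to the localization of the polynomial ring A[x] away from δx² − γx + 1; that is, R₁[(δx² − γx + 1)⁻¹] ≅ A[x][(δx² − γx + 1)⁻¹]. -/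
set_option synthInstance.maxHeartbeats 1000000
set_option maxHeartbeats 2000000

noncomputable section
open MvPolynomial

/-- The relation `u(δx² - γx + 1) + s(δx² - 1) + tδ(γx² - 2x)` defining the second
affine chart of the stabilized curve, where `u = X 0` and `x = X 1`. -/
def chartRel₁ (A : Type*) [CommRing A] (γ δ s t : A) : MvPolynomial (Fin 2) A :=
  X 0 * (C δ * X 1 ^ 2 - C γ * X 1 + 1) + C s * (C δ * X 1 ^ 2 - 1)
    + C (t * δ) * (C γ * X 1 ^ 2 - 2 * X 1)

/-- `R₁ = A[u, x]/(u(δx² - γx + 1) + s(δx² - 1) + tδ(γx² - 2x))`. -/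
abbrev ChartRing₁ (A : Type*) [CommRing A] (γ δ s t : A) :=
  MvPolynomial (Fin 2) A ⧸ Ideal.span {chartRel₁ A γ δ s t}

/-- The structure map `A[x] → R₁`, sending `x` to the image of `x`. -/
def chartMap₁ (A : Type*) [CommRing A] (γ δ s t : A) :
    Polynomial A →+* ChartRing₁ A γ δ s t :=
  (Ideal.Quotient.mk (Ideal.span {chartRel₁ A γ δ s t})).comp
    (Polynomial.aeval (X 1 : MvPolynomial (Fin 2) A)).toRingHom

/-- Let `f : P → R` be a ring homomorphism and let `ψ : R → P[g⁻¹]` restrict along `f` to the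
localization map. If ring homomorphisms `R → R[(f g)⁻¹]` inverting `f g` are determined by their
restriction along `f`, then `R[(f g)⁻¹] ≅ P[g⁻¹]` compatibly with the maps from `P`. -/
theorem exists_localizationAway_ringEquiv {P R : Type*} [CommRing P] [CommRing R]
    (f : P →+* R) (g : P) (ψ : R →+* Localization.Away g)
    (hψ : ∀ p, ψ (f p) = algebraMap P (Localization.Away g) p)
    (hf : ∀ φ φ' : R →+* Localization.Away (f g), φ.comp f = φ'.comp f →
      IsUnit (φ (f g)) → φ = φ') :
    ∃ e : Localization.Away (f g) ≃+* Localization.Away g,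
      ∀ p, e (algebraMap R _ (f p)) = algebraMap P _ p := by
  have hg : IsUnit (ψ (f g)) := by
    rw [hψ]
    exact IsLocalization.Away.algebraMap_isUnit g
  have hfg : IsUnit (((algebraMap R (Localization.Away (f g))).comp f) g) :=
    IsLocalization.Away.algebraMap_isUnit (f g)
  let α : Localization.Away (f g) →+* Localization.Away g := IsLocalization.Away.lift (f g) hg
  let β : Localization.Away g →+* Localization.Away (f g) := IsLocalization.Away.lift g hfg
  have hα (r : R) : α (algebraMap R _ r) = ψ r := IsLocalization.Away.lift_eq (f g) hg r
  have hβ (p : P) : β (algebraMap P _ p) = algebraMap R _ (f p) :=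
    IsLocalization.Away.lift_eq g hfg p
  have hβψ : β.comp ψ = algebraMap R (Localization.Away (f g)) := by
    refine hf _ _ (RingHom.ext fun p => ?_) (hg.map β)
    simp [hψ, hβ]
  refine ⟨RingEquiv.ofRingHom α β ?_ ?_, fun p => (hα (f p)).trans (hψ p)⟩
  · refine IsLocalization.ringHom_ext (Submonoid.powers g) (RingHom.ext fun p => ?_)
    simp [hα, hβ, hψ]
  · refine IsLocalization.ringHom_ext (Submonoid.powers (f g)) (RingHom.ext fun r => ?_)
    simpa [hα] using RingHom.congr_fun hβψ r

/-- The image of `u` satisfies the relation defining `ChartRing₁`, solved for `u` times the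
image of `δx² - γx + 1`. -/
theorem mk_X_zero_mul_chartMap₁ {A : Type*} [CommRing A] (γ δ s t : A) :
    (Ideal.Quotient.mk (Ideal.span {chartRel₁ A γ δ s t}) (X 0)) * chartMap₁ A γ δ s t
        (Polynomial.C δ * Polynomial.X ^ 2 - Polynomial.C γ * Polynomial.X + 1)
      = chartMap₁ A γ δ s t (-(Polynomial.C s * (Polynomial.C δ * Polynomial.X ^ 2 - 1)
          + Polynomial.C (t * δ) * (Polynomial.C γ * Polynomial.X ^ 2 - 2 * Polynomial.X))) := by
  simp only [chartMap₁, RingHom.comp_apply, ← map_mul]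
  rw [Ideal.Quotient.eq]
  refine Ideal.mem_span_singleton.mpr (dvd_of_eq ?_)
  simp [chartRel₁, MvPolynomial.algebraMap_eq, map_ofNat (Polynomial.aeval (R := A) _) 2]
  ring

/-- Ring homomorphisms out of `ChartRing₁` that invert `δx² - γx + 1` are determined by their
restriction to `A[x]`. -/
theorem ChartRing₁.ringHom_ext {A S : Type*} [CommRing A] [CommRing S] (γ δ s t : A)
    (φ φ' : ChartRing₁ A γ δ s t →+* S)
    (h : φ.comp (chartMap₁ A γ δ s t) = φ'.comp (chartMap₁ A γ δ s t))
    (hu : IsUnit (φ (chartMap₁ A γ δ s t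
      (Polynomial.C δ * Polynomial.X ^ 2 - Polynomial.C γ * Polynomial.X + 1)))) :
    φ = φ' := by
  have hp (p : Polynomial A) : φ (chartMap₁ A γ δ s t p) = φ' (chartMap₁ A γ δ s t p) :=
    RingHom.congr_fun h p
  refine Ideal.Quotient.ringHom_ext (MvPolynomial.ringHom_ext (fun a => ?_) (fun i => ?_))
  · simpa [chartMap₁, MvPolynomial.algebraMap_eq] using hp (Polynomial.C a)
  · fin_cases i
    · refine hu.mul_right_cancel ?_
      have hrel := mk_X_zero_mul_chartMap₁ γ δ s t
      have h₁ := congrArg φ hrel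
      have h₂ := congrArg φ' hrel
      rw [map_mul] at h₁ h₂
      rw [← hp, ← hp] at h₂
      exact h₁.trans h₂.symm
    · simpa [chartMap₁] using hp Polynomial.X

/-- Inverting (the image of) `δx² - γx + 1` in `R₁` yields the localization of the
one-variable polynomial ring `A[x]` away from `δx² - γx + 1`, compatibly with the
`A[x]`-algebra structures:
`R₁[(δx² - γx + 1)⁻¹] ≅ A[x][(δx² - γx + 1)⁻¹]` as `A[x]`-algebras. -/
theorem stmt17 {A : Type*} [CommRing A] (γ δ s t : A) :
    ∃ e : Localization.Away (chartMap₁ A γ δ s t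
            (Polynomial.C δ * Polynomial.X ^ 2 - Polynomial.C γ * Polynomial.X + 1))
          ≃+* Localization.Away
            (Polynomial.C δ * Polynomial.X ^ 2 - Polynomial.C γ * Polynomial.X + 1 :
              Polynomial A),
      ∀ p : Polynomial A,
        e (algebraMap (ChartRing₁ A γ δ s t) _ (chartMap₁ A γ δ s t p))
          = algebraMap (Polynomial A) _ p := by
  let L := Localization.Away
    (Polynomial.C δ * Polynomial.X ^ 2 - Polynomial.C γ * Polynomial.X + 1 : Polynomial A)
  let ι : Polynomial A →+* L := algebraMap (Polynomial A) L
  have hg : IsUnit (ι (Polynomial.C δ * Polynomial.X ^ 2 - Polynomial.C γ * Polynomial.X + 1)) :=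
    IsLocalization.Away.algebraMap_isUnit _
  obtain ⟨v, hv⟩ := hg.exists_left_inv
  let w : L := ι (-(Polynomial.C s * (Polynomial.C δ * Polynomial.X ^ 2 - 1)
    + Polynomial.C (t * δ) * (Polynomial.C γ * Polynomial.X ^ 2 - 2 * Polynomial.X))) * v
  let ev : MvPolynomial (Fin 2) A →+* L :=
    MvPolynomial.eval₂Hom (ι.comp Polynomial.C) ![w, ι Polynomial.X]
  have hev : ev (chartRel₁ A γ δ s t) = 0 := by
    have hw : w * ι (Polynomial.C δ * Polynomial.X ^ 2 - Polynomial.C γ * Polynomial.X + 1)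
        = ι (-(Polynomial.C s * (Polynomial.C δ * Polynomial.X ^ 2 - 1)
          + Polynomial.C (t * δ) * (Polynomial.C γ * Polynomial.X ^ 2 - 2 * Polynomial.X))) := by
      rw [mul_assoc, hv, mul_one]
    clear_value w
    simp only [map_add, map_sub, map_mul, map_pow, map_neg, map_one, map_ofNat] at hw
    simp only [ev, chartRel₁, map_add, map_sub, map_mul, map_pow, map_one, map_ofNat,
      coe_eval₂Hom, eval₂_X, eval₂_C, RingHom.comp_apply, Matrix.cons_val_zero,
      Matrix.cons_val_one]
    linear_combination hw
  let ψ : ChartRing₁ A γ δ s t →+* L := Ideal.Quotient.lift _ ev fun a ha => by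
    obtain ⟨b, rfl⟩ := Ideal.mem_span_singleton.mp ha
    rw [map_mul, hev, zero_mul]
  have hψ : ψ.comp (chartMap₁ A γ δ s t) = ι := by
    refine Polynomial.ringHom_ext (fun a => ?_) ?_ <;>
      simp [ψ, ev, chartMap₁, MvPolynomial.algebraMap_eq]
  exact exists_localizationAway_ringEquiv _ _ ψ (RingHom.congr_fun hψ)
    (ChartRing₁.ringHom_ext γ δ s t)
end
end
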